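/- arXiv:2202.00577 — 6 statements merged into one kernel-verified Lean document; each statement's English description precedes it below -/
import Mathlib

section
/- Let p, q, u, v be points in the Euclidean plane ℝ² such that p, q, u are affinely independent and u and v lie strictly on the same side of the line through p and q. If the angle ∠ p u q is strictly smaller than the angle ∠ p v q, then v lies in the open circumdisk of the triangle p q u, i.e. the distance from v to the circumcenter of the triangle with vertices p, q, u is strictly less than its circumradius. (Lemma: Circumdisk of a triangle.) -/
open EuclideanGeometry

/-!
The difference of the power of `x` with respect to a sphere through `p` and `q` and the inner
product `⟪p - x, q - x⟫` (the power of `x` with respect to the sphere on diameter `pq`) is an affine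
function of `x` vanishing at `p` and `q`. On a half-plane bounded by the line `pq` it is therefore
proportional to the distance to that line, hence to the area `|px| * |qx| * sin ∠ p x q` of the
parallelogram spanned by `p - x` and `q - x`. If the sphere also passes through `u`, and `v` lies in
the same half-plane as `u`, comparing the values at `u` and `v` yields

`sin ∠ p u q * power v = |pv| * |qv| * sin (∠ p u q - ∠ p v q)`,

so the position of `v` relative to the sphere is decided by comparing the two angles.
-/

open scoped RealInnerProductSpace

section SameSide

variable {R V P : Type*} [Field R] [LinearOrder R] [IsStrictOrderedRing R] [AddCommGroup V]
  [Module R V] [AddTorsor V P]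

theorem exists_pos_vsub_eq_smul_vsub_add_of_sSameSide {s : AffineSubspace R P} {p x y : P}
    (hp : p ∈ s) (h : s.SSameSide x y) :
    ∃ r : R, 0 < r ∧ ∃ w ∈ s.direction, y -ᵥ p = r • (x -ᵥ p) + w := by
  obtain ⟨hx, hy, p', hp', hray⟩ := (AffineSubspace.sSameSide_iff_exists_left hp).1 h
  have hxp : x -ᵥ p ≠ 0 := vsub_ne_zero.2 fun hxp ↦ hx (hxp ▸ hp)
  have hyp' : y -ᵥ p' ≠ 0 := vsub_ne_zero.2 fun hyp' ↦ hy (hyp' ▸ hp')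
  obtain ⟨r, hr, hrxy⟩ := hray.exists_pos_left hxp hyp'
  refine ⟨r, hr, p' -ᵥ p, AffineSubspace.vsub_mem_direction hp' hp, ?_⟩
  rw [hrxy, vsub_add_vsub_cancel]

theorem exists_pos_vsub_eq_smul_vsub_add_smul_vsub_of_sSameSide_line {p q x y : P}
    (h : line[R, p, q].SSameSide x y) :
    ∃ r : R, 0 < r ∧ ∃ t : R, y -ᵥ p = r • (x -ᵥ p) + t • (q -ᵥ p) := by
  obtain ⟨r, hr, w, hw, hy⟩ :=
    exists_pos_vsub_eq_smul_vsub_add_of_sSameSide (left_mem_affineSpan_pair R p q) h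
  rw [direction_affineSpan, mem_vectorSpan_pair_rev] at hw
  obtain ⟨t, rfl⟩ := hw
  exact ⟨r, hr, t, hy⟩

end SameSide

variable {V P : Type*} [NormedAddCommGroup V] [InnerProductSpace ℝ V] [MetricSpace P]
  [NormedAddTorsor V P]

theorem sin_angle_mul_norm_mul_norm_smul_add_smul (a b c d : ℝ) (x y : V) :
    Real.sin (InnerProductGeometry.angle (a • x + b • y) (c • x + d • y)) *
        (‖a • x + b • y‖ * ‖c • x + d • y‖) =
      |a * d - b * c| * (Real.sin (InnerProductGeometry.angle x y) * (‖x‖ * ‖y‖)) := by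
  rw [InnerProductGeometry.sin_angle_mul_norm_mul_norm,
    InnerProductGeometry.sin_angle_mul_norm_mul_norm, ← Real.sqrt_sq_eq_abs,
    ← Real.sqrt_mul (sq_nonneg _)]
  congr 1
  simp only [inner_add_left, inner_add_right, real_inner_smul_left, real_inner_smul_right,
    real_inner_comm x y]
  ring

theorem sin_angle_mul_dist_mul_dist_of_vsub_eq {p q u v : P} {r t : ℝ}
    (h : v -ᵥ p = r • (u -ᵥ p) + t • (q -ᵥ p)) :
    Real.sin (∠ p v q) * (dist p v * dist q v) =
      |r| * (Real.sin (∠ p u q) * (dist p u * dist q u)) := by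
  have hpv : p -ᵥ v = (r + t) • (p -ᵥ u) + (-t) • (q -ᵥ u) := by
    rw [← neg_vsub_eq_vsub_rev v p, h, ← neg_vsub_eq_vsub_rev p u,
      ← vsub_sub_vsub_cancel_right q p u]
    module
  have hqv : q -ᵥ v = (r + t - 1) • (p -ᵥ u) + (1 - t) • (q -ᵥ u) := by
    rw [← vsub_add_vsub_cancel q p v, hpv, ← vsub_sub_vsub_cancel_right q p u]
    module
  have hdet : (r + t) * (1 - t) - -t * (r + t - 1) = r := by ring
  simp only [EuclideanGeometry.angle, dist_eq_norm_vsub V, hpv, hqv,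
    sin_angle_mul_norm_mul_norm_smul_add_smul, hdet]

theorem power_eq_inner_vsub_vsub_add_inner {s : Sphere P} {p : P} (hp : p ∈ s) (q x : P) :
    s.power x =
      ⟪p -ᵥ x, q -ᵥ x⟫ + ⟪x -ᵥ p, (q -ᵥ s.center) + (p -ᵥ s.center)⟫ := by
  rw [Sphere.power, ← mem_sphere.1 hp, dist_eq_norm_vsub V, dist_eq_norm_vsub V,
    ← vsub_sub_vsub_cancel_right p x s.center, ← vsub_sub_vsub_cancel_right q x s.center,
    ← vsub_sub_vsub_cancel_right x p s.center]
  simp only [← real_inner_self_eq_norm_sq, inner_add_right, inner_sub_left, inner_sub_right,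
    real_inner_comm (x -ᵥ s.center)]
  ring

theorem inner_vsub_vsub_center_add_vsub_center_eq_zero {s : Sphere P} {p q : P} (hp : p ∈ s)
    (hq : q ∈ s) : ⟪q -ᵥ p, (q -ᵥ s.center) + (p -ᵥ s.center)⟫ = 0 := by
  rw [← vsub_sub_vsub_cancel_right q p s.center, real_inner_comm, real_inner_add_sub_eq_zero_iff,
    ← dist_eq_norm_vsub, ← dist_eq_norm_vsub, mem_sphere.1 hp, mem_sphere.1 hq]

theorem power_sub_inner_vsub_vsub_of_vsub_eq {s : Sphere P} {p q u v : P} {r t : ℝ} (hp : p ∈ s)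
    (hq : q ∈ s) (h : v -ᵥ p = r • (u -ᵥ p) + t • (q -ᵥ p)) :
    s.power v - ⟪p -ᵥ v, q -ᵥ v⟫ = r * (s.power u - ⟪p -ᵥ u, q -ᵥ u⟫) := by
  rw [power_eq_inner_vsub_vsub_add_inner hp q v, power_eq_inner_vsub_vsub_add_inner hp q u, h,
    inner_add_left, real_inner_smul_left, real_inner_smul_left,
    inner_vsub_vsub_center_add_vsub_center_eq_zero hp hq]
  ring

theorem sin_angle_mul_power_eq_dist_mul_dist_mul_sin_angle_sub {s : Sphere P} {p q u v : P}
    (hp : p ∈ s) (hq : q ∈ s) (hu : u ∈ s) (hside : line[ℝ, p, q].SSameSide u v) :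
    Real.sin (∠ p u q) * s.power v =
      dist p v * dist q v * Real.sin (∠ p u q - ∠ p v q) := by
  obtain ⟨r, hr, t, hv⟩ := exists_pos_vsub_eq_smul_vsub_add_smul_vsub_of_sSameSide_line hside
  have hinner (x : P) : ⟪p -ᵥ x, q -ᵥ x⟫ = Real.cos (∠ p x q) * (dist p x * dist q x) := by
    rw [dist_eq_norm_vsub V, dist_eq_norm_vsub V, EuclideanGeometry.angle,
      InnerProductGeometry.cos_angle_mul_norm_mul_norm]
  have hpower := power_sub_inner_vsub_vsub_of_vsub_eq hp hq hv
  rw [(Sphere.power_eq_zero_iff_mem_sphere (Sphere.radius_nonneg_of_mem hu)).2 hu, hinner,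
    hinner] at hpower
  have harea := sin_angle_mul_dist_mul_dist_of_vsub_eq hv
  rw [abs_of_pos hr] at harea
  rw [Real.sin_sub]
  linear_combination Real.sin (∠ p u q) * hpower + Real.cos (∠ p u q) * harea

theorem sin_neg_iff_of_neg_pi_lt_of_le_pi {x : ℝ} (hx : -Real.pi < x) (hx' : x ≤ Real.pi) :
    Real.sin x < 0 ↔ x < 0 := by
  refine ⟨fun hsin ↦ ?_, fun hneg ↦ Real.sin_neg_of_neg_of_neg_pi_lt hneg hx⟩
  contrapose! hsin
  exact Real.sin_nonneg_of_nonneg_of_le_pi hsin hx'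

theorem circumdisk_of_triangle_general {s : Sphere P} {p q u v : P} (hp : p ∈ s) (hq : q ∈ s)
    (hu : u ∈ s) (hpq : p ≠ q) (hside : line[ℝ, p, q].SSameSide u v) :
    dist v s.center < s.radius ↔ ∠ p u q < ∠ p v q := by
  have not_collinear {x : P} (hx : x ∉ line[ℝ, p, q]) : ¬Collinear ℝ {p, x, q} := fun h ↦
    hx (h.mem_affineSpan_of_mem_of_ne (by simp) (by simp) (by simp) hpq)
  have hu_col := not_collinear hside.left_notMem
  have hv_col := not_collinear hside.right_notMem
  have hsin : 0 < Real.sin (∠ p u q) := sin_pos_of_not_collinear hu_col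
  have hdist : 0 < dist p v * dist q v :=
    mul_pos (dist_pos.2 (ne₁₂_of_not_collinear hv_col))
      (dist_pos.2 (ne₂₃_of_not_collinear hv_col).symm)
  calc
    dist v s.center < s.radius ↔ s.power v < 0 :=
      (Sphere.power_neg_iff_dist_center_lt_radius (Sphere.radius_nonneg_of_mem hu)).symm
    _ ↔ Real.sin (∠ p u q) * s.power v < 0 := (smul_neg_iff_of_pos_left hsin).symm
    _ ↔ dist p v * dist q v * Real.sin (∠ p u q - ∠ p v q) < 0 := by
      rw [sin_angle_mul_power_eq_dist_mul_dist_mul_sin_angle_sub hp hq hu hside]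
    _ ↔ Real.sin (∠ p u q - ∠ p v q) < 0 := smul_neg_iff_of_pos_left hdist
    _ ↔ ∠ p u q - ∠ p v q < 0 :=
      sin_neg_iff_of_neg_pi_lt_of_le_pi
        (by linarith [angle_pos_of_not_collinear hu_col, angle_le_pi p v q])
        (by linarith [angle_le_pi p u q, angle_nonneg p v q])
    _ ↔ ∠ p u q < ∠ p v q := sub_neg

/-- Circumdisk of a triangle: if `u` and `v` lie strictly on the same side of the line
through `p` and `q` and `∠ p u q < ∠ p v q`, then `v` lies in the open circumdisk of the
triangle `p q u`. -/
theorem circumdisk_of_triangle (p q u v : EuclideanSpace ℝ (Fin 2))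
    (hind : AffineIndependent ℝ ![p, q, u])
    (hside : (affineSpan ℝ ({p, q} : Set (EuclideanSpace ℝ (Fin 2)))).SSameSide u v)
    (hang : ∠ p u q < ∠ p v q) :
    dist v (Affine.Simplex.circumcenter ⟨![p, q, u], hind⟩) <
      Affine.Simplex.circumradius (⟨![p, q, u], hind⟩ : Affine.Simplex ℝ (EuclideanSpace ℝ (Fin 2)) 2) := by
  have hmem := Affine.Simplex.mem_circumsphere ⟨![p, q, u], hind⟩
  exact (circumdisk_of_triangle_general (hmem 0) (hmem 1) (hmem 2)
    (hind.injective.ne (show (0 : Fin 3) ≠ 1 by decide)) hside).2 hang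
end

section
/- Let p, q, v be points in a real inner product space with p ≠ q, v ≠ p and v ≠ q, and let α = dist(p, q)/2. Then the triple intersection of the closed balls of radius α centered at p, q and v is nonempty if and only if the angle ∠ p v q is non-acute, i.e. ∠ p v q ≥ π/2. (Core of the lemma on long edges in Delaunay complexes.) -/
open EuclideanGeometry

/-!
By strict convexity, equality in the triangle inequality forces the balls around `p` and `q` to meet
only in the midpoint of `p` and `q`, so the triple intersection is nonempty exactly when `v` lies in
the ball with diameter `p q`. By the median identity and the law of cosines, the power of `v` with
respect to the bounding sphere is `dist v p * dist v q * cos (∠ p v q)`, which is nonpositive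
exactly when the angle at `v` is non-acute.
-/

section StrictConvexSpace

variable {V P : Type*} [NormedAddCommGroup V] [NormedSpace ℝ V] [StrictConvexSpace ℝ V]
  [MetricSpace P] [NormedAddTorsor V P]

theorem closedBall_half_dist_inter_closedBall_half_dist (p q : P) :
    Metric.closedBall p (dist p q / 2) ∩ Metric.closedBall q (dist p q / 2) =
      {midpoint ℝ p q} := by
  refine Set.Subset.antisymm ?_ (Set.singleton_subset_iff.2 ⟨?_, ?_⟩)
  · rintro x ⟨hxp, hxq⟩
    rw [Metric.mem_closedBall'] at hxp
    rw [Metric.mem_closedBall] at hxq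
    have htri : dist p q ≤ dist p x + dist x q := dist_triangle p x q
    exact eq_midpoint_of_dist_eq_half (by linarith) (by linarith)
  · rw [Metric.mem_closedBall, dist_midpoint_left, Real.norm_two, inv_mul_eq_div]
  · rw [Metric.mem_closedBall, dist_midpoint_right, Real.norm_two, inv_mul_eq_div]

theorem closedBall_half_dist_triple_inter_nonempty_iff (p q v : P) (r : ℝ) :
    (Metric.closedBall p (dist p q / 2) ∩ Metric.closedBall q (dist p q / 2) ∩
        Metric.closedBall v r).Nonempty ↔ dist v (midpoint ℝ p q) ≤ r := by
  rw [closedBall_half_dist_inter_closedBall_half_dist, Set.singleton_inter_nonempty,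
    Metric.mem_closedBall']

end StrictConvexSpace

section InnerProductSpace

variable {V P : Type*} [NormedAddCommGroup V] [InnerProductSpace ℝ V] [MetricSpace P]
  [NormedAddTorsor V P]

theorem dist_midpoint_sq_eq_half_dist_sq_add_mul_cos_angle (p q v : P) :
    dist v (midpoint ℝ p q) ^ 2 =
      (dist p q / 2) ^ 2 + dist v p * dist v q * Real.cos (∠ p v q) := by
  have hApollonius := dist_sq_add_dist_sq_eq_two_mul_dist_midpoint_sq_add_half_dist_sq v p q
  have hcos := law_cos p v q
  rw [dist_comm p v, dist_comm q v] at hcos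
  linarith

theorem cos_angle_nonpos_iff_pi_div_two_le_angle (p v q : P) :
    Real.cos (∠ p v q) ≤ 0 ↔ Real.pi / 2 ≤ ∠ p v q := by
  have hright : Real.pi / 2 ∈ Set.Icc 0 Real.pi := ⟨by positivity, by linarith [Real.pi_pos]⟩
  rw [← Real.cos_pi_div_two]
  exact Real.strictAntiOn_cos.le_iff_ge ⟨angle_nonneg p v q, angle_le_pi p v q⟩ hright

theorem dist_midpoint_le_half_dist_iff_pi_div_two_le_angle {p q v : P} (hvp : v ≠ p)
    (hvq : v ≠ q) : dist v (midpoint ℝ p q) ≤ dist p q / 2 ↔ Real.pi / 2 ≤ ∠ p v q := by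
  have hpos : 0 < dist v p * dist v q := mul_pos (dist_pos.2 hvp) (dist_pos.2 hvq)
  calc
    dist v (midpoint ℝ p q) ≤ dist p q / 2 ↔
        dist v (midpoint ℝ p q) ^ 2 ≤ (dist p q / 2) ^ 2 :=
        (sq_le_sq₀ dist_nonneg (by positivity)).symm
    _ ↔ dist v p * dist v q * Real.cos (∠ p v q) ≤ 0 := by
        rw [dist_midpoint_sq_eq_half_dist_sq_add_mul_cos_angle, add_le_iff_nonpos_right]
    _ ↔ Real.cos (∠ p v q) ≤ 0 := smul_nonpos_iff_nonpos_of_pos_left hpos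
    _ ↔ Real.pi / 2 ≤ ∠ p v q := cos_angle_nonpos_iff_pi_div_two_le_angle p v q

theorem triple_ball_inter_nonempty_iff_angle_nonacute_general {p q v : P} (hvp : v ≠ p)
    (hvq : v ≠ q) :
    (Metric.closedBall p (dist p q / 2) ∩ Metric.closedBall q (dist p q / 2) ∩
        Metric.closedBall v (dist p q / 2)).Nonempty ↔ Real.pi / 2 ≤ ∠ p v q :=
  (closedBall_half_dist_triple_inter_nonempty_iff p q v _).trans
    (dist_midpoint_le_half_dist_iff_pi_div_two_le_angle hvp hvq)

end InnerProductSpace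

/-- The triple intersection of the closed balls of radius `dist p q / 2` centred at `p`, `q`
and `v` is nonempty if and only if the angle `∠ p v q` is non-acute. -/
theorem triple_ball_inter_nonempty_iff_angle_nonacute
    {V : Type*} [NormedAddCommGroup V] [InnerProductSpace ℝ V] (p q v : V)
    (hpq : p ≠ q) (hvp : v ≠ p) (hvq : v ≠ q) :
    (Metric.closedBall p (dist p q / 2) ∩ Metric.closedBall q (dist p q / 2) ∩
        Metric.closedBall v (dist p q / 2)).Nonempty ↔ Real.pi / 2 ≤ ∠ p v q :=
  triple_ball_inter_nonempty_iff_angle_nonacute_general hvp hvq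
end

section
/- Let V be a real inner product space, r a nonzero vector in V, and a, b, c points of V such that the angle between the vector b − a and r is strictly less than π/4 and the angle between the vector c − b and r is strictly less than π/4. Then the angle ∠ a b c is strictly greater than π/2. (Angle part of the lemma on tails in ℝ^N: points proceeding along a ray with angular deviation below π/4 make a non-acute angle at every intermediate point.) -/
open EuclideanGeometry

section AffineSpace

variable {V P : Type*} [NormedAddCommGroup V] [InnerProductSpace ℝ V] [MetricSpace P]
  [NormedAddTorsor V P]

theorem angle_eq_pi_sub_angle_vsub_vsub (a b c : P) :
    ∠ a b c = Real.pi - InnerProductGeometry.angle (b -ᵥ a) (c -ᵥ b) := by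
  rw [EuclideanGeometry.angle, ← neg_vsub_eq_vsub_rev b a, InnerProductGeometry.angle_neg_left]

theorem pi_sub_angle_vsub_add_angle_vsub_le_angle (r : V) (a b c : P) :
    Real.pi - (InnerProductGeometry.angle (b -ᵥ a) r + InnerProductGeometry.angle (c -ᵥ b) r) ≤
      ∠ a b c := by
  rw [angle_eq_pi_sub_angle_vsub_vsub, InnerProductGeometry.angle_comm (c -ᵥ b) r]
  exact sub_le_sub_left (InnerProductGeometry.angle_le_angle_add_angle (b -ᵥ a) r (c -ᵥ b)) _

theorem angle_gt_pi_div_two_of_angular_deviation_lt_pi_div_four_general (r : V) (a b c : P)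
    (h : InnerProductGeometry.angle (b -ᵥ a) r + InnerProductGeometry.angle (c -ᵥ b) r <
      Real.pi / 2) :
    Real.pi / 2 < ∠ a b c := by
  linarith [pi_sub_angle_vsub_add_angle_vsub_le_angle r a b c]

end AffineSpace

/-- If the vectors `b - a` and `c - b` both make an angle strictly less than `π/4` with a
nonzero vector `r`, then the angle `∠ a b c` at `b` is strictly obtuse. -/
theorem angle_gt_pi_div_two_of_angular_deviation_lt_pi_div_four
    {V : Type*} [NormedAddCommGroup V] [InnerProductSpace ℝ V]
    (r : V) (hr : r ≠ 0) (a b c : V)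
    (hab : InnerProductGeometry.angle (b - a) r < Real.pi / 4)
    (hbc : InnerProductGeometry.angle (c - b) r < Real.pi / 4) :
    Real.pi / 2 < ∠ a b c :=
  angle_gt_pi_div_two_of_angular_deviation_lt_pi_div_four_general r a b c <| by
    simp only [vsub_eq_sub]
    linarith
end

section
/- Let V be a real inner product space, r a nonzero vector in V, and a, b, c points of V such that the angle between the vector b − a and r is strictly less than π/4 and the angle between the vector c − b and r is strictly less than π/4. Then dist(a, c) > dist(a, b) and dist(a, c) > dist(b, c); in particular [a, c] is a strictly longest edge of the triangle a b c. (Longest-edge part of the lemma on tails in ℝ^N.) -/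
/-! Going from `a` to `b` to `c`, the direction turns at `b` by at most the sum of the two
deviations from `r`. This sum is less than `π / 2`, so the interior angle at `b` is obtuse, and by
the law of cosines the side opposite to it is strictly longer than the other two. -/

section

open InnerProductGeometry
open scoped EuclideanGeometry Real

variable {V P : Type*} [NormedAddCommGroup V] [InnerProductSpace ℝ V]
  [MetricSpace P] [NormedAddTorsor V P] {a b c : P}

theorem dist_lt_dist_of_pi_div_two_le_angle (hbc : b ≠ c) (h : π / 2 ≤ ∠ a b c) :
    dist a b < dist a c := by
  have cos_nonpos : Real.cos (∠ a b c) ≤ 0 :=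
    Real.cos_nonpos_of_pi_div_two_le_of_le h
      (by linarith [EuclideanGeometry.angle_le_pi a b c, Real.pi_pos])
  have cos_term_nonpos : 2 * dist a b * dist c b * Real.cos (∠ a b c) ≤ 0 :=
    mul_nonpos_of_nonneg_of_nonpos (by positivity) cos_nonpos
  have dist_sq_pos : 0 < dist c b ^ 2 := pow_pos (dist_pos.mpr hbc.symm) 2
  refine lt_of_pow_lt_pow_left₀ 2 dist_nonneg ?_
  linarith [EuclideanGeometry.law_cos a b c]

theorem pi_sub_angle_add_angle_le_angle (a b c : P) (r : V) :
    π - (angle (b -ᵥ a) r + angle (c -ᵥ b) r) ≤ ∠ a b c := by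
  have interior_eq : ∠ a b c = π - angle (b -ᵥ a) (c -ᵥ b) := by
    rw [EuclideanGeometry.angle, ← neg_vsub_eq_vsub_rev b a, angle_neg_left]
  have turn_le : angle (b -ᵥ a) (c -ᵥ b) ≤ angle (b -ᵥ a) r + angle (c -ᵥ b) r := by
    simpa only [angle_comm r] using angle_le_angle_add_angle (b -ᵥ a) r (c -ᵥ b)
  linarith

theorem dist_lt_of_angular_deviation_lt_pi_div_four_general (r : V)
    (h : angle (b -ᵥ a) r + angle (c -ᵥ b) r < π / 2) :
    dist a b < dist a c ∧ dist b c < dist a c := by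
  have obtuse : π / 2 < ∠ a b c := by linarith [pi_sub_angle_add_angle_le_angle a b c r]
  -- A degenerate angle `∠ a a c` or `∠ a b b` is `π / 2` by convention, hence not obtuse.
  have hab : b ≠ a := by
    rintro rfl
    exact obtuse.ne' (EuclideanGeometry.angle_self_left b c)
  have hbc : b ≠ c := by
    rintro rfl
    exact obtuse.ne' (EuclideanGeometry.angle_self_right b a)
  refine ⟨dist_lt_dist_of_pi_div_two_le_angle hbc obtuse.le, ?_⟩
  rw [dist_comm b c, dist_comm a c]
  exact dist_lt_dist_of_pi_div_two_le_angle hab (EuclideanGeometry.angle_comm a b c ▸ obtuse.le)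

end

/-- If the vectors `b - a` and `c - b` both make an angle strictly less than `π/4` with a
nonzero vector `r`, then `[a, c]` is a strictly longest edge of the triangle `a b c`. -/
theorem dist_lt_of_angular_deviation_lt_pi_div_four
    {V : Type*} [NormedAddCommGroup V] [InnerProductSpace ℝ V]
    (r : V) (hr : r ≠ 0) (a b c : V)
    (hab : InnerProductGeometry.angle (b - a) r < Real.pi / 4)
    (hbc : InnerProductGeometry.angle (c - b) r < Real.pi / 4) :
    dist a b < dist a c ∧ dist b c < dist a c :=
  dist_lt_of_angular_deviation_lt_pi_div_four_general r
    (by simp only [vsub_eq_sub]; linarith)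
end

section
/- Let V be a real inner product space, r a nonzero vector in V, and p : Fin n → V a finite sequence of points such that for all indices i < j the angle between the vector p(j) − p(i) and r is strictly less than π/4. Then for any index i with i + 1 < n and any indices j ≤ i and k ≥ i + 1 with (j, k) ≠ (i, i + 1), one has dist(p(j), p(k)) > dist(p(i), p(i+1)). (Core of the claim that every edge between successive points of a tail is short: any other edge joining the two parts of the sequence separated between positions i and i+1 is strictly longer.) -/
/-!
Two vectors within `π/4` of a common direction are at an angle of at most `π/2`, so adding one to
the other lengthens it. Hence moving either endpoint of an edge outwards along the sequence
lengthens the edge.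
-/

section Deviation

open InnerProductGeometry
open scoped Real RealInnerProductSpace

variable {V : Type*} [NormedAddCommGroup V] [InnerProductSpace ℝ V]

lemma inner_nonneg_of_angle_add_angle_le_pi_div_two {u v r : V}
    (h : angle u r + angle v r ≤ π / 2) : 0 ≤ ⟪u, v⟫ := by
  have angle_le : angle u v ≤ π / 2 :=
    calc angle u v
      _ ≤ angle u r + angle r v := angle_le_angle_add_angle u r v
      _ = angle u r + angle v r := by rw [angle_comm r v]
      _ ≤ π / 2 := h
  rw [← cos_angle_mul_norm_mul_norm]
  have cos_nonneg : 0 ≤ Real.cos (angle u v) :=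
    Real.cos_nonneg_of_neg_pi_div_two_le_of_le
      (by linarith [angle_nonneg u v, Real.pi_pos]) angle_le
  positivity

lemma norm_lt_norm_add_of_inner_nonneg {u v : V} (huv : 0 ≤ ⟪u, v⟫) (hv : v ≠ 0) :
    ‖u‖ < ‖u + v‖ := by
  refine lt_of_pow_lt_pow_left₀ 2 (norm_nonneg _) ?_
  have norm_sq_pos : 0 < ‖v‖ ^ 2 := by positivity
  linarith [norm_add_sq_real u v]

variable {P : Type*} [MetricSpace P] [NormedAddTorsor V P]

lemma dist_lt_dist_left_of_inner_vsub_nonneg {x y z : P}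
    (h : 0 ≤ ⟪y -ᵥ x, z -ᵥ y⟫) (hyz : y ≠ z) : dist x y < dist x z := by
  rw [dist_comm x y, dist_comm x z, dist_eq_norm_vsub V, dist_eq_norm_vsub V,
    ← vsub_add_vsub_cancel z y x, add_comm]
  exact norm_lt_norm_add_of_inner_nonneg h (vsub_ne_zero.mpr hyz.symm)

lemma dist_lt_dist_right_of_inner_vsub_nonneg {x y z : P}
    (h : 0 ≤ ⟪y -ᵥ x, z -ᵥ y⟫) (hxy : x ≠ y) : dist y z < dist x z := by
  rw [dist_comm y z, dist_comm x z]
  refine dist_lt_dist_left_of_inner_vsub_nonneg ?_ hxy.symm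
  rwa [← neg_vsub_eq_vsub_rev z y, ← neg_vsub_eq_vsub_rev y x, inner_neg_neg, real_inner_comm]

-- The angle between `0` and any vector is `π / 2` by convention.
lemma ne_of_angle_vsub_ne_pi_div_two {x y : P} {r : V} (h : angle (y -ᵥ x) r ≠ π / 2) :
    x ≠ y := by
  rintro rfl
  exact h (by rw [vsub_self, angle_zero_left])

theorem successive_edge_shortest_of_angular_deviation_lt_pi_div_four_general
    {ι : Type*} [PartialOrder ι] (r : V) (p : ι → P)
    (hdev : ∀ i j, i < j → angle (p j -ᵥ p i) r ≤ π / 4)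
    {i m j k : ι} (him : i < m) (hj : j ≤ i) (hk : m ≤ k) (hne : ¬(j = i ∧ k = m)) :
    dist (p i) (p m) < dist (p j) (p k) := by
  have inner_nonneg {a b c : ι} (hab : a < b) (hbc : b < c) :
      0 ≤ ⟪p b -ᵥ p a, p c -ᵥ p b⟫ :=
    inner_nonneg_of_angle_add_angle_le_pi_div_two (r := r)
      (by linarith [hdev a b hab, hdev b c hbc])
  have point_ne {a b : ι} (hab : a < b) : p a ≠ p b := by
    have angle_lt : angle (p b -ᵥ p a) r < π / 2 := by linarith [hdev a b hab, Real.pi_pos]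
    exact ne_of_angle_vsub_ne_pi_div_two angle_lt.ne
  have extend_left (hji : j < i) : dist (p i) (p m) < dist (p j) (p m) :=
    dist_lt_dist_right_of_inner_vsub_nonneg (inner_nonneg hji him) (point_ne hji)
  have extend_right (hmk : m < k) : dist (p j) (p m) < dist (p j) (p k) :=
    dist_lt_dist_left_of_inner_vsub_nonneg (inner_nonneg (hj.trans_lt him) hmk) (point_ne hmk)
  rcases hj.eq_or_lt with rfl | hji <;> rcases hk.eq_or_lt with rfl | hmk
  · exact absurd ⟨rfl, rfl⟩ hne
  · exact extend_right hmk
  · exact extend_left hji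
  · exact (extend_left hji).trans (extend_right hmk)

end Deviation

/-- In a sequence of points whose pairwise connecting vectors (in increasing index order)
make an angle strictly less than `π/4` with a fixed nonzero vector `r`, any edge joining a
point of index `≤ i` to a point of index `≥ i + 1`, other than the edge between the
successive points `i` and `i + 1`, is strictly longer than that successive edge. -/
theorem successive_edge_shortest_of_angular_deviation_lt_pi_div_four
    {V : Type*} [NormedAddCommGroup V] [InnerProductSpace ℝ V]
    (r : V) (hr : r ≠ 0) {n : ℕ} (p : Fin n → V)
    (hdev : ∀ i j : Fin n, i < j → InnerProductGeometry.angle (p j - p i) r < Real.pi / 4)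
    (i j k : Fin n) (hi : (i : ℕ) + 1 < n) (hj : j ≤ i) (hk : (i : ℕ) + 1 ≤ (k : ℕ))
    (hne : ¬(j = i ∧ (k : ℕ) = (i : ℕ) + 1)) :
    dist (p i) (p ⟨(i : ℕ) + 1, hi⟩) < dist (p j) (p k) :=
  successive_edge_shortest_of_angular_deviation_lt_pi_div_four_general r p
    (fun a b hab => (hdev a b hab).le) (Fin.lt_def.mpr (Nat.lt_succ_self i)) hj (Fin.le_def.mpr hk)
    (fun h => hne ⟨h.1, congrArg Fin.val h.2⟩)
end

section
/- Let V be a real inner product space, v a point of V, r a nonzero vector, and θ, μ real numbers with μ ≥ θ + π/2. Let A and T be finite sets of points of V, each containing v, such that every point p ∈ A with p ≠ v satisfies: the angle between r and p − v is at least μ, and every point q ∈ T with q ≠ v satisfies: the angle between r and q − v is at most θ. Then for every p ∈ A \ {v} and every q ∈ T \ {v}, the angle ∠ p v q is at least π/2, and consequently dist(p, q) > dist(p, v) and dist(p, q) > dist(q, v). (Geometric core of the theorem on a long wedge with a tail: every edge between A − {v} and T − {v} is a strictly longest edge of a triangle with third vertex v.) -/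
open EuclideanGeometry

/-!
By the triangle inequality for angles at `v`, directions making angles at least `μ` and at most `θ`
with `r` are at least `μ - θ ≥ π / 2` apart. The cosine term in the law of cosines at `v` is then
nonnegative, so the square of the side opposite `v` is at least the sum of the squares of the other
two, both of which are positive.
-/

section

variable {V : Type*} [NormedAddCommGroup V] [InnerProductSpace ℝ V]

lemma angle_sub_angle_le_angle (x y z : V) :
    InnerProductGeometry.angle x y - InnerProductGeometry.angle x z ≤
      InnerProductGeometry.angle y z := by
  rw [sub_le_iff_le_add', InnerProductGeometry.angle_comm y z]
  exact InnerProductGeometry.angle_le_angle_add_angle x z y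

variable {P : Type*} [MetricSpace P] [NormedAddTorsor V P] {a b c : P}

lemma dist_sq_add_dist_sq_le_of_pi_div_two_le_angle (h : Real.pi / 2 ≤ ∠ a b c) :
    dist a b ^ 2 + dist c b ^ 2 ≤ dist a c ^ 2 := by
  have hcos : Real.cos (∠ a b c) ≤ 0 :=
    Real.cos_nonpos_of_pi_div_two_le_of_le h
      (by linarith [EuclideanGeometry.angle_le_pi a b c, Real.pi_pos])
  have hterm : 2 * dist a b * dist c b * Real.cos (∠ a b c) ≤ 0 :=
    mul_nonpos_of_nonneg_of_nonpos (by positivity) hcos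
  linarith [law_cos a b c]

lemma dist_left_lt_dist_of_pi_div_two_le_angle (hcb : c ≠ b) (h : Real.pi / 2 ≤ ∠ a b c) :
    dist a b < dist a c := by
  have hpos : 0 < dist c b ^ 2 := pow_pos (dist_pos.mpr hcb) 2
  refine lt_of_pow_lt_pow_left₀ 2 dist_nonneg ?_
  linarith [dist_sq_add_dist_sq_le_of_pi_div_two_le_angle h]

lemma dist_right_lt_dist_of_pi_div_two_le_angle (hab : a ≠ b) (h : Real.pi / 2 ≤ ∠ a b c) :
    dist c b < dist a c := by
  rw [EuclideanGeometry.angle_comm] at h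
  rw [dist_comm a c]
  exact dist_left_lt_dist_of_pi_div_two_le_angle hab h

theorem long_wedge_with_tail_edges_long_general
    (v : P) (r : V) (_hr : r ≠ 0) (θ μ : ℝ) (hμ : θ + Real.pi / 2 ≤ μ) (A T : Set P)
    (hA : ∀ p ∈ A, p ≠ v → μ ≤ InnerProductGeometry.angle r (p -ᵥ v))
    (hT : ∀ q ∈ T, q ≠ v → InnerProductGeometry.angle r (q -ᵥ v) ≤ θ) :
    ∀ p ∈ A, p ≠ v → ∀ q ∈ T, q ≠ v →
      Real.pi / 2 ≤ ∠ p v q ∧ dist p v < dist p q ∧ dist q v < dist p q := by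
  intro p hp hpv q hq hqv
  have hangle : Real.pi / 2 ≤ ∠ p v q :=
    calc Real.pi / 2 ≤ μ - θ := by linarith
      _ ≤ InnerProductGeometry.angle r (p -ᵥ v) - InnerProductGeometry.angle r (q -ᵥ v) :=
        sub_le_sub (hA p hp hpv) (hT q hq hqv)
      _ ≤ ∠ p v q := angle_sub_angle_le_angle r (p -ᵥ v) (q -ᵥ v)
  exact ⟨hangle, dist_left_lt_dist_of_pi_div_two_le_angle hqv hangle,
    dist_right_lt_dist_of_pi_div_two_le_angle hpv hangle⟩

end

/-- Geometric core of the long-wedge-with-a-tail theorem: if every point of `A - {v}` makes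
an angle at least `μ` with a ray direction `r` at `v`, every point of `T - {v}` makes an
angle at most `θ` with `r` at `v`, and `μ ≥ θ + π/2`, then every edge between `A - {v}` and
`T - {v}` subtends a non-acute angle at `v` and is a strictly longest edge of the triangle
with third vertex `v`. -/
theorem long_wedge_with_tail_edges_long
    {V : Type*} [NormedAddCommGroup V] [InnerProductSpace ℝ V]
    (v : V) (r : V) (hr : r ≠ 0) (θ μ : ℝ) (hμ : θ + Real.pi / 2 ≤ μ)
    (A T : Finset V) (hvA : v ∈ A) (hvT : v ∈ T)
    (hA : ∀ p ∈ A, p ≠ v → μ ≤ InnerProductGeometry.angle r (p - v))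
    (hT : ∀ q ∈ T, q ≠ v → InnerProductGeometry.angle r (q - v) ≤ θ) :
    ∀ p ∈ A, p ≠ v → ∀ q ∈ T, q ≠ v →
      Real.pi / 2 ≤ ∠ p v q ∧ dist p v < dist p q ∧ dist q v < dist p q :=
  long_wedge_with_tail_edges_long_general v r hr θ μ hμ A T hA hT
end
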